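/- For every 0 < p < ∞, there exists a sequence ν_1, ν_2, … of absolutely continuous probability measures in M_1^p(ℝ_+) \ {δ_0} such that liminf_{n→∞} 𝒥_p(ν_n) ≥ lim_{n→∞} log Δ_n(p). -/

import Mathlib

open MeasureTheory Filter Finset
open scoped ENNReal

/-- `log Δ_n(p)`: the supremum over all `0 ≤ t_1 ≤ … ≤ t_n` of
`(2/(n(n-1))) Σ_{i<j} log|t_i - t_j| - (1/p) log((1/n) Σ t_i^p)`.
Tuples with a repeated entry give the value `-∞` and hence do not contribute to the
supremum, so we may equivalently take the supremum over strictly increasing nonnegative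
tuples. -/
noncomputable def logDeltaN (p : ℝ) (n : ℕ) : ℝ :=
  sSup { r : ℝ | ∃ t : Fin n → ℝ, (∀ i, 0 ≤ t i) ∧ StrictMono t ∧
    r = (2 / (n * (n - 1) : ℝ)) * (∑ i, ∑ j, if i < j then Real.log |t i - t j| else 0)
      - (1 / p) * Real.log ((1 / n : ℝ) * ∑ i, t i ^ p) }

/-- The logarithmic energy `∫∫ log|x-y| μ(dx) μ(dy)`, with values in `ℝ ∪ {-∞}` (for the
measures considered here the positive part of the integral is always finite). -/
noncomputable def logEnergy (μ : Measure ℝ) : EReal :=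
  ((∫⁻ z : ℝ × ℝ, ENNReal.ofReal (Real.log |z.1 - z.2|) ∂(μ.prod μ)).toReal : EReal)
    - ((∫⁻ z : ℝ × ℝ, ENNReal.ofReal (-Real.log |z.1 - z.2|) ∂(μ.prod μ)) : EReal)

/-- The functional `𝒥_p(μ) = ∫∫ log|x-y| μ(dx) μ(dy) - (1/p) log ∫ |x|^p μ(dx)`, with
values in `ℝ ∪ {-∞}`. -/
noncomputable def Jfun (p : ℝ) (μ : Measure ℝ) : EReal :=
  logEnergy μ - (((1 / p) * Real.log (∫ x, |x| ^ p ∂μ) : ℝ) : EReal)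

/-- `μ ∈ M_1^p(ℝ_+) \ {δ_0}`: a Borel probability measure on `ℝ_+ = [0,∞)` (i.e. giving no
mass to `(-∞,0)`) with finite `p`-th moment, different from the Dirac measure at `0`. -/
def MemM1pPos (p : ℝ) (μ : Measure ℝ) : Prop :=
  IsProbabilityMeasure μ ∧ μ (Set.Iio 0) = 0 ∧
    (∫⁻ x, ENNReal.ofReal (|x| ^ p) ∂μ) < ∞ ∧ μ ≠ Measure.dirac 0

/-- The functional of a tuple whose supremum is `logDeltaN p n`. -/
noncomputable def tupleFun (p : ℝ) (n : ℕ) (t : Fin n → ℝ) : ℝ :=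
  (2 / (n * (n - 1) : ℝ)) * (∑ i, ∑ j, if i < j then Real.log |t i - t j| else 0)
      - (1 / p) * Real.log ((1 / n : ℝ) * ∑ i, t i ^ p)

lemma StrictMono.sum_rpow_pos {n : ℕ} (hn : 2 ≤ n) {t : Fin n → ℝ} (h0 : ∀ i, 0 ≤ t i)
    (ht : StrictMono t) (p : ℝ) : 0 < ∑ i, t i ^ p := by
  have h1 : 0 < t ⟨1, by omega⟩ :=
    (h0 ⟨0, by omega⟩).trans_lt (ht (by simp [Fin.lt_def]))
  exact Finset.sum_pos' (fun i _ => Real.rpow_nonneg (h0 i) p)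
    ⟨⟨1, by omega⟩, Finset.mem_univ _, Real.rpow_pos_of_pos h1 p⟩

lemma sum_sum_sum_succAbove {n : ℕ} (G : Fin (n + 1) → Fin (n + 1) → ℝ) (hG : ∀ i, G i i = 0) :
    ∑ k : Fin (n + 1), ∑ i : Fin n, ∑ j : Fin n, G (k.succAbove i) (k.succAbove j)
      = ((n : ℝ) - 1) * ∑ i, ∑ j, G i j := by
  have key (k : Fin (n + 1)) : ∑ i : Fin n, ∑ j : Fin n, G (k.succAbove i) (k.succAbove j)
      = ∑ i, ∑ j, G i j - ∑ j, G k j - ∑ i, G i k := by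
    have h1 (i : Fin (n + 1)) := Fin.sum_univ_succAbove (G i) k
    have h2 := Fin.sum_univ_succAbove (fun i => ∑ j, G i j) k
    have h3 := Fin.sum_univ_succAbove (fun i => G i k) k
    simp only [hG] at h3
    have h4 : ∑ i : Fin n, ∑ j : Fin n, G (k.succAbove i) (k.succAbove j)
        = ∑ i : Fin n, (∑ j, G (k.succAbove i) j - G (k.succAbove i) k) :=
      Finset.sum_congr rfl fun i _ => by rw [h1]; ring
    rw [h4, Finset.sum_sub_distrib]
    linarith
  simp_rw [key, Finset.sum_sub_distrib]
  rw [Finset.sum_comm (f := fun x i => G i x)]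
  simp
  ring

lemma tupleFun_succ_le {p : ℝ} (hp : 0 < p) {n : ℕ} (hn : 2 ≤ n) {B : ℝ}
    (hB : ∀ t : Fin n → ℝ, (∀ i, 0 ≤ t i) → StrictMono t → tupleFun p n t ≤ B)
    (t : Fin (n + 1) → ℝ) (h0 : ∀ i, 0 ≤ t i) (ht : StrictMono t) :
    tupleFun p (n + 1) t ≤ B := by
  have hn' : (2 : ℝ) ≤ n := by exact_mod_cast hn
  set T : ℝ := ∑ i, t i ^ p with hT
  have hTpos : 0 < T := ht.sum_rpow_pos (by omega) h0 p
  set S : ℝ := ∑ i, ∑ j, if i < j then Real.log |t i - t j| else 0 with hS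
  let s (k : Fin (n + 1)) : ℝ := ∑ i : Fin n, ∑ j : Fin n,
    if i < j then Real.log |t (k.succAbove i) - t (k.succAbove j)| else 0
  let τ (k : Fin (n + 1)) : ℝ := ∑ i : Fin n, t (k.succAbove i) ^ p
  have hs : ∑ k, s k = ((n : ℝ) - 1) * S := by
    have := sum_sum_sum_succAbove (fun i j => if i < j then Real.log |t i - t j| else 0)
      (fun i => by simp)
    simpa [s, hS] using this
  have hτ (k) : τ k = T - t k ^ p := by
    have := Fin.sum_univ_succAbove (fun i => t i ^ p) k
    simp only [τ]; linarith
  have hτpos (k) : 0 < τ k :=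
    (ht.comp (Fin.strictMono_succAbove k)).sum_rpow_pos hn (fun i => h0 _) p
  have hτsum : ∑ k, τ k = n * T := by
    simp only [hτ, Finset.sum_sub_distrib, ← hT]
    simp; ring
  have hk (k) : 2 / (n * (n - 1) : ℝ) * s k ≤
      B + (1 / p) * (Real.log (1 / (n + 1 : ℝ) * T) + (τ k * ((n + 1) / (n * T)) - 1)) := by
    have h := hB (fun i => t (k.succAbove i)) (fun i => h0 _)
      (ht.comp (Fin.strictMono_succAbove k))
    have h' : 2 / (n * (n - 1) : ℝ) * s k - (1 / p) * Real.log ((1 / n : ℝ) * τ k) ≤ B := h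
    have hlog : Real.log ((1 / n : ℝ) * τ k) ≤
        Real.log (1 / (n + 1 : ℝ) * T) + (τ k * ((n + 1) / (n * T)) - 1) := by
      have hpos : 0 < τ k * ((n + 1) / (n * T)) := mul_pos (hτpos k) (by positivity)
      have e : (1 / n : ℝ) * τ k = (1 / (n + 1 : ℝ) * T) * (τ k * ((n + 1) / (n * T))) := by
        field_simp
      rw [e, Real.log_mul (by positivity) hpos.ne']
      linarith [Real.log_le_sub_one_of_pos hpos]
    have := mul_le_mul_of_nonneg_left hlog (by positivity : 0 ≤ 1 / p)
    linarith
  have hsum := Finset.sum_le_sum fun k (_ : k ∈ Finset.univ) => hk k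
  rw [← Finset.mul_sum, hs, Finset.sum_add_distrib, ← Finset.mul_sum, Finset.sum_add_distrib,
    Finset.sum_sub_distrib, ← Finset.sum_mul, hτsum] at hsum
  simp only [Finset.sum_const, Finset.card_univ, Fintype.card_fin, nsmul_eq_mul] at hsum
  have e1 : 2 / (n * (n - 1) : ℝ) * ((n - 1) * S) = (n + 1) * (2 / ((n + 1) * n) * S) := by
    have : (n : ℝ) - 1 ≠ 0 := by linarith
    field_simp
  have e2 : n * T * ((n + 1) / (n * T)) = (n : ℝ) + 1 := by field_simp
  rw [e1, e2] at hsum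
  push_cast at hsum
  unfold tupleFun
  rw [← hS, ← hT]
  push_cast
  rw [add_sub_cancel_right]
  have : ((n : ℝ) + 1) * (2 / ((n + 1) * n) * S - 1 / p * Real.log (1 / (n + 1) * T))
    ≤ (n + 1) * B := by linarith
  exact le_of_mul_le_mul_left this (by positivity)

lemma tupleFun_two_le {p : ℝ} (hp : 0 < p) (t : Fin 2 → ℝ) (h0 : ∀ i, 0 ≤ t i)
    (ht : StrictMono t) : tupleFun p 2 t ≤ (1 / p) * Real.log 2 := by
  have h01 : t 0 < t 1 := ht (by simp)
  have h1 : 0 < t 1 := (h0 0).trans_lt h01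
  have hlog : Real.log |t 0 - t 1| ≤ Real.log (t 1) := by
    rw [abs_sub_comm, abs_of_pos (by linarith)]
    exact Real.log_le_log (by linarith) (by linarith [h0 0])
  have hlog2 : Real.log (1 / 2 * t 1 ^ p) ≤ Real.log (1 / 2 * (t 0 ^ p + t 1 ^ p)) := by
    have := Real.rpow_pos_of_pos h1 p
    have := Real.rpow_nonneg (h0 0) p
    exact Real.log_le_log (by positivity) (by linarith)
  rw [Real.log_mul (by norm_num) (Real.rpow_pos_of_pos h1 p).ne', Real.log_rpow h1, one_div,
    Real.log_inv] at hlog2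
  have := mul_le_mul_of_nonneg_left hlog2 (by positivity : 0 ≤ 1 / p)
  have e : 1 / p * (-Real.log 2 + p * Real.log (t 1)) = Real.log (t 1) - 1 / p * Real.log 2 := by
    field_simp; ring
  rw [e] at this
  simp only [Real.log_abs] at hlog
  simp [tupleFun, Fin.sum_univ_two] at this ⊢
  norm_num at this ⊢
  linarith

lemma tupleFun_le {p : ℝ} (hp : 0 < p) {n : ℕ} (hn : 2 ≤ n) :
    ∀ t : Fin n → ℝ, (∀ i, 0 ≤ t i) → StrictMono t → tupleFun p n t ≤ (1 / p) * Real.log 2 := by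
  induction n, hn using Nat.le_induction with
  | base => exact tupleFun_two_le hp
  | succ n hn ih => exact tupleFun_succ_le hp hn ih

lemma mul_log_sub_le_log_factorial (n : ℕ) : n * Real.log n - n ≤ Real.log n.factorial := by
  rcases Nat.eq_zero_or_pos n with rfl | hn
  · simp
  have hn' : (0 : ℝ) < n := by exact_mod_cast hn
  have h := Real.pow_div_factorial_le_exp (n : ℝ) hn'.le n
  have hf : (0 : ℝ) < n.factorial := by exact_mod_cast n.factorial_pos
  have := Real.log_le_log (by positivity) h
  rw [Real.log_exp, Real.log_div (by positivity) hf.ne', Real.log_pow] at this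
  linarith

lemma sum_log_sub_fin (n : ℕ) : ∑ i : Fin n, Real.log ((n : ℝ) - i) = Real.log n.factorial := by
  rw [Fin.sum_univ_eq_sum_range (fun i => Real.log ((n : ℝ) - i)) n, ← Finset.sum_range_reflect,
    ← Finset.prod_range_add_one_eq_factorial, Nat.cast_prod, Real.log_prod]
  · refine Finset.sum_congr rfl fun i hi => ?_
    have := Finset.mem_range.1 hi
    rw [Nat.cast_sub (by omega), Nat.cast_sub (by omega)]
    congr 1
    push_cast; ring
  · intro i _
    positivity

lemma le_sum_log_sub (n : ℕ) : (n * (n - 1) / 2 : ℝ) * (Real.log n - 2) ≤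
    ∑ i : Fin n, ∑ j : Fin n, if i < j then Real.log |(i : ℝ) - j| else 0 := by
  induction n with
  | zero => simp
  | succ n ih =>
    have e : ∑ i : Fin (n + 1), ∑ j : Fin (n + 1), (if i < j then Real.log |(i : ℝ) - j| else 0)
        = (∑ i : Fin n, ∑ j : Fin n, if i < j then Real.log |(i : ℝ) - j| else 0)
          + Real.log n.factorial := by
      rw [← sum_log_sub_fin n, Fin.sum_univ_castSucc]
      have : ∑ j : Fin (n + 1), (if Fin.last n < j then
          Real.log |((Fin.last n : Fin (n + 1)) : ℝ) - j| else 0) = 0 :=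
        Finset.sum_eq_zero fun j _ => if_neg (not_lt.2 (Fin.le_last j))
      rw [this, add_zero, ← Finset.sum_add_distrib]
      refine Finset.sum_congr rfl fun i _ => ?_
      rw [Fin.sum_univ_castSucc, if_pos (Fin.castSucc_lt_last i), abs_sub_comm]
      simp
    rw [e]
    rcases Nat.eq_zero_or_pos n with rfl | hn
    · simp
    have hn' : (1 : ℝ) ≤ n := by exact_mod_cast hn
    have h1 := mul_log_sub_le_log_factorial n
    have h2 : Real.log (n + 1) ≤ Real.log n + 1 / n := by
      have := Real.log_le_sub_one_of_pos (show 0 < ((n : ℝ) + 1) / n by positivity)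
      rw [Real.log_div (by positivity) (by positivity)] at this
      have e : ((n : ℝ) + 1) / n - 1 = 1 / n := by field_simp; ring
      linarith
    have h3 := mul_le_mul_of_nonneg_left h2 (by positivity : 0 ≤ (n : ℝ) * (n + 1) / 2)
    have e3 : (n : ℝ) * (n + 1) / 2 * (Real.log n + 1 / n)
        = n * (n + 1) / 2 * Real.log n + (n + 1) / 2 := by field_simp
    push_cast
    nlinarith

lemma logDeltaN_eq (p : ℝ) (n : ℕ) : logDeltaN p n =
    sSup { r : ℝ | ∃ t : Fin n → ℝ, (∀ i, 0 ≤ t i) ∧ StrictMono t ∧ r = tupleFun p n t } := rfl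

lemma bddAbove_tupleFun {p : ℝ} (hp : 0 < p) {n : ℕ} (hn : 2 ≤ n) :
    BddAbove { r : ℝ | ∃ t : Fin n → ℝ, (∀ i, 0 ≤ t i) ∧ StrictMono t ∧ r = tupleFun p n t } := by
  refine ⟨(1 / p) * Real.log 2, ?_⟩
  rintro r ⟨t, h0, ht, rfl⟩
  exact tupleFun_le hp hn t h0 ht

lemma tupleFun_le_logDeltaN {p : ℝ} (hp : 0 < p) {n : ℕ} (hn : 2 ≤ n) {t : Fin n → ℝ}
    (h0 : ∀ i, 0 ≤ t i) (ht : StrictMono t) : tupleFun p n t ≤ logDeltaN p n :=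
  le_csSup (bddAbove_tupleFun hp hn) ⟨t, h0, ht, rfl⟩

lemma nonempty_tupleFun (p : ℝ) (n : ℕ) :
    { r : ℝ | ∃ t : Fin n → ℝ, (∀ i, 0 ≤ t i) ∧ StrictMono t ∧ r = tupleFun p n t }.Nonempty :=
  ⟨_, fun i => (i : ℝ), fun i => by positivity, fun i j h => by simpa using h, rfl⟩

lemma logDeltaN_succ_le {p : ℝ} (hp : 0 < p) {n : ℕ} (hn : 2 ≤ n) :
    logDeltaN p (n + 1) ≤ logDeltaN p n := by
  rw [logDeltaN_eq p (n + 1)]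
  refine csSup_le (nonempty_tupleFun p _) ?_
  rintro r ⟨t, h0, ht, rfl⟩
  exact tupleFun_succ_le hp hn (fun s hs0 hs => tupleFun_le_logDeltaN hp hn hs0 hs) t h0 ht

lemma neg_two_le_logDeltaN {p : ℝ} (hp : 0 < p) {n : ℕ} (hn : 2 ≤ n) : -2 ≤ logDeltaN p n := by
  have hn' : (2 : ℝ) ≤ n := by exact_mod_cast hn
  have h0 : ∀ i : Fin n, (0 : ℝ) ≤ (i : ℝ) := fun i => by positivity
  have ht : StrictMono fun i : Fin n => (i : ℝ) := fun i j h => by simpa using h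
  refine le_trans ?_ (tupleFun_le_logDeltaN hp hn h0 ht)
  have hpos := ht.sum_rpow_pos hn h0 p
  have hmom : (1 / n : ℝ) * ∑ i : Fin n, (i : ℝ) ^ p ≤ (n : ℝ) ^ p := by
    have : ∑ i : Fin n, (i : ℝ) ^ p ≤ ∑ i : Fin n, (n : ℝ) ^ p :=
      Finset.sum_le_sum fun i _ =>
        Real.rpow_le_rpow (h0 i) (by exact_mod_cast i.2.le) hp.le
    rw [Finset.sum_const, Finset.card_univ, Fintype.card_fin, nsmul_eq_mul] at this
    rw [one_div, inv_mul_le_iff₀ (by positivity)]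
    exact this
  have hlog := Real.log_le_log (by positivity) hmom
  rw [Real.log_rpow (by positivity)] at hlog
  have h1 := mul_le_mul_of_nonneg_left hlog (by positivity : 0 ≤ 1 / p)
  have e1 : 1 / p * (p * Real.log n) = Real.log n := by field_simp
  have hn1 : (0 : ℝ) < n - 1 := by linarith
  have h2 := mul_le_mul_of_nonneg_left (le_sum_log_sub n)
    (by positivity : 0 ≤ 2 / (n * (n - 1) : ℝ))
  have e2 : 2 / (n * (n - 1) : ℝ) * (n * (n - 1) / 2 * (Real.log n - 2)) = Real.log n - 2 := by
    field_simp
  rw [e1] at h1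
  rw [e2] at h2
  unfold tupleFun
  linarith

lemma exists_tendsto_logDeltaN {p : ℝ} (hp : 0 < p) :
    ∃ L : ℝ, Tendsto (fun n => logDeltaN p n) atTop (nhds L) ∧
      ∀ n, 2 ≤ n → L ≤ logDeltaN p n := by
  have hanti : Antitone fun k => logDeltaN p (k + 2) :=
    antitone_nat_of_succ_le fun k => logDeltaN_succ_le hp (by omega)
  have hbdd : BddBelow (Set.range fun k => logDeltaN p (k + 2)) := by
    refine ⟨-2, ?_⟩
    rintro _ ⟨k, rfl⟩
    exact neg_two_le_logDeltaN hp (by omega)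
  refine ⟨_, (tendsto_add_atTop_iff_nat 2).1 (tendsto_atTop_ciInf hanti hbdd), fun n hn => ?_⟩
  obtain ⟨k, rfl⟩ := Nat.exists_eq_add_of_le' hn
  exact ciInf_le hbdd k

/-- The equal-weight mixture of the uniform distributions on the `n` blocks `[a i, a i + h]`. -/
noncomputable def blockMeasure {n : ℕ} (a : Fin n → ℝ) (h : ℝ) : Measure ℝ :=
  ENNReal.ofReal (1 / (n * h)) •
    Measure.sum fun i => (volume : Measure ℝ).restrict (Set.Icc (a i) (a i + h))

lemma blockMeasure_absolutelyContinuous {n : ℕ} (a : Fin n → ℝ) (h : ℝ) :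
    blockMeasure a h ≪ volume :=
  (Measure.absolutelyContinuous_sum_left fun _ =>
    Measure.restrict_le_self.absolutelyContinuous).smul_left _

lemma isProbabilityMeasure_blockMeasure {n : ℕ} (hn : 0 < n) (a : Fin n → ℝ) {h : ℝ} (hh : 0 < h) :
    IsProbabilityMeasure (blockMeasure a h) := by
  refine ⟨?_⟩
  have hn' : (0 : ℝ) < n := by exact_mod_cast hn
  simp only [blockMeasure, Measure.smul_apply, Measure.sum_apply _ MeasurableSet.univ,
    Measure.restrict_apply_univ, Real.volume_Icc, add_sub_cancel_left, tsum_fintype,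
    Finset.sum_const, Finset.card_univ, Fintype.card_fin, smul_eq_mul, nsmul_eq_mul]
  rw [← ENNReal.ofReal_natCast, ← ENNReal.ofReal_mul hn'.le, ← ENNReal.ofReal_mul (by positivity)]
  rw [one_div_mul_cancel (by positivity), ENNReal.ofReal_one]

lemma ae_blockMeasure {n : ℕ} {a : Fin n → ℝ} {h : ℝ} {P : ℝ → Prop}
    (hP : ∀ i, ∀ x ∈ Set.Icc (a i) (a i + h), P x) : ∀ᵐ x ∂blockMeasure a h, P x := by
  refine Measure.ae_smul_measure ?_ _
  rw [Measure.ae_sum_iff]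
  exact fun i => ae_restrict_of_forall_mem measurableSet_Icc (hP i)

lemma integral_blockMeasure {n : ℕ} {a : Fin n → ℝ} {h : ℝ} (hh : 0 < h) {f : ℝ → ℝ}
    (hf : ∀ i, IntegrableOn f (Set.Icc (a i) (a i + h))) :
    ∫ x, f x ∂blockMeasure a h = 1 / (n * h) * ∑ i, ∫ x in Set.Icc (a i) (a i + h), f x := by
  rw [blockMeasure, integral_smul_measure, Measure.sum_fintype,
    integral_finsetSum_measure fun i _ => hf i, ENNReal.toReal_ofReal (by positivity), smul_eq_mul]

lemma blockMeasure_prod {n : ℕ} (a : Fin n → ℝ) (h : ℝ) :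
    (blockMeasure a h).prod (blockMeasure a h) =
      (ENNReal.ofReal (1 / (n * h)) * ENNReal.ofReal (1 / (n * h))) •
        ∑ q : Fin n × Fin n, (volume : Measure (ℝ × ℝ)).restrict
          (Set.Icc (a q.1) (a q.1 + h) ×ˢ Set.Icc (a q.2) (a q.2 + h)) := by
  rw [blockMeasure, Measure.prod_smul_left, Measure.prod_smul_right, Measure.prod_sum, smul_smul,
    Measure.sum_fintype]
  simp_rw [Measure.prod_restrict, Measure.volume_eq_prod]

lemma integrableOn_log_abs_sub (R : ℝ) :
    IntegrableOn (fun z : ℝ × ℝ => Real.log |z.1 - z.2|) (Set.Icc 0 R ×ˢ Set.Icc 0 R) := by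
  have hf : Integrable (Set.indicator (Set.Icc 0 R) fun _ : ℝ => (1 : ℝ)) :=
    (integrable_indicator_iff measurableSet_Icc).2 (by simp)
  have hg : Integrable (Set.indicator (Set.Icc (-R) R) Real.log) := by
    rw [integrable_indicator_iff measurableSet_Icc]
    rcases le_or_gt (-R) R with h | h
    · rw [integrableOn_Icc_iff_integrableOn_Ioc,
        ← intervalIntegrable_iff_integrableOn_Ioc_of_le h]
      exact intervalIntegral.intervalIntegrable_log'
    · simp [Set.Icc_eq_empty_of_lt h]
  have := (hf.convolution_integrand (ContinuousLinearMap.mul ℝ ℝ) hg).integrableOn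
    (s := Set.Icc 0 R ×ˢ Set.Icc 0 R)
  refine this.congr_fun ?_ (measurableSet_Icc.prod measurableSet_Icc)
  rintro ⟨x, y⟩ ⟨⟨hx0, hx⟩, hy0, hy⟩
  simp only at hx0 hx hy0 hy
  have hxy : x - y ∈ Set.Icc (-R) R := ⟨by linarith, by linarith⟩
  simp [Set.indicator_of_mem hxy, hy0, hy]

lemma le_setIntegral_log_block (a : ℝ) {h : ℝ} (hh : 0 < h) {x : ℝ} (hx : x ∈ Set.Icc a (a + h)) :
    h * (Real.log h - Real.log 2 - 1) ≤ ∫ y in Set.Icc a (a + h), Real.log |x - y| := by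
  rw [integral_Icc_eq_integral_Ioc, ← intervalIntegral.integral_of_le (by linarith)]
  simp only [Real.log_abs]
  rw [intervalIntegral.integral_comp_sub_left (fun s => Real.log s) x, integral_log]
  obtain ⟨h1, h2⟩ := hx
  have e : x - (a + h) = -(h - (x - a)) := by ring
  rw [e, Real.log_neg_eq_log]
  set u := x - a
  have hu0 : 0 ≤ u := by simp only [u]; linarith
  have hu1 : u ≤ h := by simp only [u]; linarith
  have key (s : ℝ) (hs : 0 ≤ s) : s * (Real.log h - Real.log 2) + s - h / 2 ≤ s * Real.log s := by
    rcases hs.eq_or_lt with rfl | hs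
    · simp; positivity
    have := Real.log_le_sub_one_of_pos (show 0 < h / (2 * s) by positivity)
    rw [Real.log_div hh.ne' (by positivity), Real.log_mul (by norm_num) hs.ne'] at this
    have h3 := mul_le_mul_of_nonneg_left this hs.le
    have e3 : s * (h / (2 * s) - 1) = h / 2 - s := by field_simp
    rw [e3] at h3
    linarith
  have k1 := key u hu0
  have k2 := key (h - u) (by linarith)
  linarith

lemma le_integral_log_diag {a h : ℝ} (ha : 0 ≤ a) (hh : 0 < h) :
    h ^ 2 * (Real.log h - Real.log 2 - 1) ≤
      ∫ z in Set.Icc a (a + h) ×ˢ Set.Icc a (a + h), Real.log |z.1 - z.2| := by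
  have hint := (integrableOn_log_abs_sub (a + h)).mono_set
    (Set.prod_mono (Set.Icc_subset_Icc_left ha) (Set.Icc_subset_Icc_left ha))
  rw [Measure.volume_eq_prod] at hint ⊢
  rw [setIntegral_prod _ hint]
  rw [IntegrableOn, ← Measure.prod_restrict] at hint
  have := setIntegral_mono_on (μ := volume) (s := Set.Icc a (a + h))
    (f := fun _ => h * (Real.log h - Real.log 2 - 1)) (integrableOn_const measure_Icc_lt_top.ne)
    hint.integral_prod_left
    measurableSet_Icc fun x hx => le_setIntegral_log_block a hh hx
  rw [setIntegral_const, Real.volume_real_Icc, add_sub_cancel_left, max_eq_left hh.le,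
    smul_eq_mul] at this
  refine le_trans (le_of_eq ?_) this
  ring

lemma le_integral_log_offDiag {a b h c : ℝ} (ha : 0 ≤ a) (hb : 0 ≤ b) (hh : 0 < h)
    (hc : ∀ x ∈ Set.Icc a (a + h), ∀ y ∈ Set.Icc b (b + h), c ≤ Real.log |x - y|) :
    h ^ 2 * c ≤ ∫ z in Set.Icc a (a + h) ×ˢ Set.Icc b (b + h), Real.log |z.1 - z.2| := by
  have hint := (integrableOn_log_abs_sub (a + b + h)).mono_set
    (Set.prod_mono (Set.Icc_subset_Icc (a₂ := 0) (b₂ := a + b + h) ha (by linarith : a + h ≤ _))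
      (Set.Icc_subset_Icc hb (by linarith : b + h ≤ _)))
  have hvol : volume.real (Set.Icc a (a + h) ×ˢ Set.Icc b (b + h)) = h ^ 2 := by
    rw [Measure.volume_eq_prod, measureReal_prod_prod]
    simp [hh.le, sq]
  have := setIntegral_ge_of_const_le_real (measurableSet_Icc.prod measurableSet_Icc)
    (by rw [Measure.volume_eq_prod, Measure.prod_prod]; simp [ENNReal.mul_eq_top])
    (fun z hz => hc z.1 hz.1 z.2 hz.2) hint
  rw [hvol] at this
  linarith

lemma logEnergy_eq_integral {μ : Measure ℝ}
    (h : Integrable (fun z : ℝ × ℝ => Real.log |z.1 - z.2|) (μ.prod μ)) :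
    logEnergy μ = ((∫ z, Real.log |z.1 - z.2| ∂(μ.prod μ) : ℝ) : EReal) := by
  have hneg : ∫⁻ z : ℝ × ℝ, ENNReal.ofReal (-Real.log |z.1 - z.2|) ∂(μ.prod μ) ≠ ∞ :=
    h.neg.lintegral_lt_top.ne
  rw [logEnergy, integral_eq_lintegral_pos_part_sub_lintegral_neg_part h, EReal.coe_sub,
    EReal.coe_ennreal_toReal hneg]

lemma le_logEnergy_blockMeasure {n : ℕ} (hn : 0 < n) {t a : Fin n → ℝ} {h : ℝ} (hh : 0 < h)
    (ha : ∀ i, 0 ≤ a i) (ht : StrictMono t)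
    (hta : ∀ i j, i < j → ∀ x ∈ Set.Icc (a i) (a i + h), ∀ y ∈ Set.Icc (a j) (a j + h),
      t j - t i ≤ y - x) :
    (((1 / n ^ 2 : ℝ) * (2 * ∑ i, ∑ j, (if i < j then Real.log |t i - t j| else 0)
      + n * (Real.log h - Real.log 2 - 1)) : ℝ) : EReal) ≤ logEnergy (blockMeasure a h) := by
  have hn' : (0 : ℝ) < n := by exact_mod_cast hn
  have hint (q : Fin n × Fin n) : IntegrableOn (fun z : ℝ × ℝ => Real.log |z.1 - z.2|)
      (Set.Icc (a q.1) (a q.1 + h) ×ˢ Set.Icc (a q.2) (a q.2 + h)) :=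
    (integrableOn_log_abs_sub (a q.1 + a q.2 + h)).mono_set
      (Set.prod_mono
        (Set.Icc_subset_Icc (ha _) (by linarith [ha q.2] : a q.1 + h ≤ _))
        (Set.Icc_subset_Icc (ha _) (by linarith [ha q.1] : a q.2 + h ≤ _)))
  have hc : ENNReal.ofReal (1 / (n * h)) * ENNReal.ofReal (1 / (n * h)) ≠ ∞ :=
    ENNReal.mul_ne_top ENNReal.ofReal_ne_top ENNReal.ofReal_ne_top
  have hintν : Integrable (fun z : ℝ × ℝ => Real.log |z.1 - z.2|)
      ((blockMeasure a h).prod (blockMeasure a h)) := by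
    rw [blockMeasure_prod]
    exact (integrable_finsetSum_measure.2 fun q _ => hint q).smul_measure hc
  rw [logEnergy_eq_integral hintν, EReal.coe_le_coe_iff, blockMeasure_prod, integral_smul_measure,
    integral_finsetSum_measure fun q _ => hint q, ENNReal.toReal_mul,
    ENNReal.toReal_ofReal (by positivity), smul_eq_mul, Fintype.sum_prod_type]
  have hlow (i j : Fin n) : h ^ 2 * ((if i < j then Real.log |t i - t j| else 0)
      + (if j < i then Real.log |t j - t i| else 0)
      + if i = j then Real.log h - Real.log 2 - 1 else 0) ≤
      ∫ z in Set.Icc (a i) (a i + h) ×ˢ Set.Icc (a j) (a j + h), Real.log |z.1 - z.2| := by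
    rcases lt_trichotomy i j with hij | rfl | hij
    · rw [if_pos hij, if_neg hij.not_gt, if_neg hij.ne, add_zero, add_zero]
      refine le_integral_log_offDiag (ha i) (ha j) hh fun x hx y hy => ?_
      have h1 := hta i j hij x hx y hy
      have h2 := ht hij
      rw [abs_sub_comm, abs_of_pos (by linarith), abs_sub_comm, abs_of_pos (by linarith)]
      exact Real.log_le_log (by linarith) h1
    · simpa using le_integral_log_diag (ha i) hh
    · rw [if_pos hij, if_neg hij.not_gt, if_neg hij.ne', add_zero, zero_add]
      refine le_integral_log_offDiag (ha i) (ha j) hh fun x hx y hy => ?_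
      have h1 := hta j i hij y hy x hx
      have h2 := ht hij
      rw [abs_sub_comm, abs_of_pos (by linarith), abs_of_pos (by linarith)]
      exact Real.log_le_log (by linarith) h1
  have hsum := Finset.sum_le_sum fun i (_ : i ∈ Finset.univ) =>
    Finset.sum_le_sum fun j (_ : j ∈ Finset.univ) => hlow i j
  simp only [← Finset.mul_sum, Finset.sum_add_distrib] at hsum
  rw [Finset.sum_comm (f := fun i j : Fin n => if j < i then Real.log |t j - t i| else 0)] at hsum
  simp only [Finset.sum_ite_eq, Finset.mem_univ, if_true, Finset.sum_const, Finset.card_univ,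
    Fintype.card_fin, nsmul_eq_mul] at hsum
  have hmul := mul_le_mul_of_nonneg_left hsum
    (by positivity : 0 ≤ 1 / (n * h) * (1 / (n * h)))
  refine le_trans (le_of_eq ?_) hmul
  field_simp
  ring

lemma add_rpow_le_of_scale {p x δ η : ℝ} (hp : 0 < p) (hx : 0 ≤ x) (hδ : 0 ≤ δ) (hη : 0 < η) :
    (x + δ) ^ p ≤ (1 + δ / η) ^ p * (x ^ p + η ^ p) := by
  have hm : x + δ ≤ (1 + δ / η) * max x η := by
    have h1 : δ / η * η ≤ δ / η * max x η :=
      mul_le_mul_of_nonneg_left (le_max_right _ _) (by positivity)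
    rw [div_mul_cancel₀ _ hη.ne'] at h1
    linarith [le_max_left x η]
  have hm' : (max x η) ^ p ≤ x ^ p + η ^ p := by
    have := Real.rpow_nonneg hx p
    have := Real.rpow_nonneg hη.le p
    rcases max_choice x η with h | h <;> rw [h] <;> linarith
  calc (x + δ) ^ p ≤ ((1 + δ / η) * max x η) ^ p := Real.rpow_le_rpow (by positivity) hm hp.le
    _ = (1 + δ / η) ^ p * (max x η) ^ p :=
      Real.mul_rpow (by positivity) (hx.trans (le_max_left _ _))
    _ ≤ _ := mul_le_mul_of_nonneg_left hm' (by positivity)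

lemma integral_rpow_blockMeasure_mem {p : ℝ} (hp : 0 < p) {n : ℕ} (hn : 0 < n) {t a : Fin n → ℝ}
    {h δ : ℝ} (hh : 0 < h) (ht0 : ∀ i, 0 ≤ t i) (hta : ∀ i, t i ≤ a i)
    (hat : ∀ i, a i + h ≤ t i + δ) :
    Integrable (fun x => |x| ^ p) (blockMeasure a h) ∧
      ∫ x, |x| ^ p ∂blockMeasure a h ∈
        Set.Icc (1 / n * ∑ i, t i ^ p) (1 / n * ∑ i, (t i + δ) ^ p) := by
  have hn' : (0 : ℝ) < n := by exact_mod_cast hn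
  have hcont : Continuous fun x : ℝ => |x| ^ p := continuous_abs.rpow_const fun _ => Or.inr hp.le
  have hint (i) : IntegrableOn (fun x : ℝ => |x| ^ p) (Set.Icc (a i) (a i + h)) :=
    hcont.integrableOn_Icc
  refine ⟨?_, ?_⟩
  · rw [blockMeasure, Measure.sum_fintype]
    exact (integrable_finsetSum_measure.2 fun i _ => hint i).smul_measure ENNReal.ofReal_ne_top
  have hvol (i) : volume.real (Set.Icc (a i) (a i + h)) = h := by simp [hh.le]
  have hconst (i) (c : ℝ) : ∫ _ in Set.Icc (a i) (a i + h), c = h * c := by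
    rw [setIntegral_const, hvol, smul_eq_mul]
  have habs (i) (x : ℝ) (hx : x ∈ Set.Icc (a i) (a i + h)) : |x| = x :=
    abs_of_nonneg ((ht0 i).trans ((hta i).trans hx.1))
  rw [integral_blockMeasure hh hint]
  have e (c : Fin n → ℝ) : 1 / n * ∑ i, c i = 1 / (n * h) * ∑ i, h * c i := by
    rw [← Finset.mul_sum]; field_simp
  rw [e, e]
  constructor <;> refine mul_le_mul_of_nonneg_left (Finset.sum_le_sum fun i _ => ?_) (by positivity)
  · rw [← hconst i]
    refine setIntegral_mono_on (integrableOn_const measure_Icc_lt_top.ne) (hint i)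
      measurableSet_Icc fun x hx => ?_
    rw [habs i x hx]
    exact Real.rpow_le_rpow (ht0 i) ((hta i).trans hx.1) hp.le
  · rw [← hconst i]
    refine setIntegral_mono_on (hint i) (integrableOn_const measure_Icc_lt_top.ne)
      measurableSet_Icc fun x hx => ?_
    rw [habs i x hx]
    exact Real.rpow_le_rpow ((ht0 i).trans ((hta i).trans hx.1)) (hx.2.trans (hat i)) hp.le

/-- The loss in passing from an `n`-tuple to a measure smoothed at relative scale `n⁻³`. -/
noncomputable def smoothingLoss (p : ℝ) (n : ℕ) : ℝ :=
  (3 * Real.log n + Real.log 2 + 1) / n + Real.log (1 + 2 / n)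
    + (1 / p) * Real.log (1 + (1 / n : ℝ) ^ p)

lemma exists_measure_le_Jfun {p : ℝ} (hp : 0 < p) {n : ℕ} (hn : 2 ≤ n) {t : Fin n → ℝ}
    (h0 : ∀ i, 0 ≤ t i) (ht : StrictMono t) :
    ∃ ν : Measure ℝ, (MemM1pPos p ν ∧ ν ≪ volume) ∧
      (((1 - 1 / n) * tupleFun p n t - smoothingLoss p n : ℝ) : EReal) ≤ Jfun p ν := by
  have hn' : (2 : ℝ) ≤ n := by exact_mod_cast hn
  have hn0 : (0 : ℝ) < n := by linarith
  have hT := ht.sum_rpow_pos hn h0 p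
  set m : ℝ := (1 / n : ℝ) * ∑ i, t i ^ p with hm
  have hmpos : 0 < m := by positivity
  set M : ℝ := m ^ (1 / p) with hM
  have hMpos : 0 < M := Real.rpow_pos_of_pos hmpos _
  have hMp : M ^ p = m := by
    rw [hM, ← Real.rpow_mul hmpos.le, one_div_mul_cancel hp.ne', Real.rpow_one]
  have hlogM : Real.log M = 1 / p * Real.log m := Real.log_rpow hmpos _
  set h : ℝ := M / n ^ 3 with hh
  have hhpos : 0 < h := by positivity
  have hlogh : Real.log h = Real.log M - 3 * Real.log n := by
    rw [hh, Real.log_div hMpos.ne' (by positivity), Real.log_pow]; norm_num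
  set a : Fin n → ℝ := fun i => t i + 2 * h * i with ha
  have hta (i) : t i ≤ a i := by
    have : 0 ≤ 2 * h * (i : ℝ) := by positivity
    simp only [ha]; linarith
  have ha0 (i) : 0 ≤ a i := (h0 i).trans (hta i)
  have hat (i) : a i + h ≤ t i + 2 * M / n ^ 2 := by
    have hi : ((i : ℕ) : ℝ) + 1 ≤ n := by exact_mod_cast i.2
    have e : 2 * M / n ^ 2 = 2 * h * n := by rw [hh]; field_simp
    rw [e]
    simp only [ha]
    nlinarith
  have hsep (i j : Fin n) (hij : i < j) (x : ℝ) (hx : x ∈ Set.Icc (a i) (a i + h)) (y : ℝ)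
      (hy : y ∈ Set.Icc (a j) (a j + h)) : t j - t i ≤ y - x := by
    have hi : ((i : ℕ) : ℝ) + 1 ≤ (j : ℕ) := by exact_mod_cast hij
    have h1 := hx.2
    have h2 := hy.1
    simp only [ha] at h1 h2
    nlinarith
  obtain ⟨hintp, hmom⟩ := integral_rpow_blockMeasure_mem hp (by omega) hhpos h0 hta hat
  have hE := le_logEnergy_blockMeasure (by omega) hhpos ha0 ht hsep
  have hac := blockMeasure_absolutelyContinuous a h
  refine ⟨blockMeasure a h, ⟨⟨isProbabilityMeasure_blockMeasure (by omega) a hhpos, ?_, ?_, ?_⟩,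
    hac⟩, ?_⟩
  · have : ∀ᵐ x ∂blockMeasure a h, 0 ≤ x := ae_blockMeasure fun i x hx => (ha0 i).trans hx.1
    simpa [ae_iff, Set.Iio] using this
  · exact hintp.lintegral_lt_top
  · intro hd
    have := hac (Real.volume_singleton (a := 0))
    simp [hd] at this
  set I : ℝ := ∫ x, |x| ^ p ∂blockMeasure a h with hI
  have hIpos : 0 < I := hmpos.trans_le hmom.1
  have hIle : I ≤ (1 + 2 / n) ^ p * (m * (1 + (1 / n : ℝ) ^ p)) := by
    refine hmom.2.trans ?_
    have hη : 0 < M / n := by positivity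
    have hδ : 0 ≤ 2 * M / n ^ 2 := by positivity
    have hs := Finset.sum_le_sum fun i (_ : i ∈ Finset.univ) =>
      add_rpow_le_of_scale hp (h0 i) hδ hη
    have e1 : 2 * M / n ^ 2 / (M / n) = 2 / n := by field_simp
    have e2 : (M / n) ^ p = m * (1 / n : ℝ) ^ p := by
      rw [← hMp, ← Real.mul_rpow hMpos.le (by positivity), mul_one_div]
    rw [← Finset.mul_sum, Finset.sum_add_distrib, e1, e2, Finset.sum_const, Finset.card_univ,
      Fintype.card_fin, nsmul_eq_mul] at hs
    have e3 : ∑ i, t i ^ p = n * m := by rw [hm]; field_simp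
    rw [e3] at hs
    refine (mul_le_mul_of_nonneg_left hs (by positivity : 0 ≤ 1 / (n : ℝ))).trans (le_of_eq ?_)
    generalize (1 / n : ℝ) ^ p = w
    field_simp
  have hlogI : 1 / p * Real.log I ≤
      Real.log (1 + 2 / n) + Real.log M + 1 / p * Real.log (1 + (1 / n : ℝ) ^ p) := by
    have h1 := Real.log_le_log hIpos hIle
    rw [Real.log_mul (by positivity) (by positivity), Real.log_rpow (by positivity),
      Real.log_mul (by positivity) (by positivity)] at h1
    have h2 := mul_le_mul_of_nonneg_left h1 (by positivity : 0 ≤ 1 / p)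
    rw [hlogM]
    refine h2.trans (le_of_eq ?_)
    field_simp
    ring
  rw [Jfun, ← hI]
  refine le_trans ?_ (EReal.sub_le_sub hE le_rfl)
  rw [← EReal.coe_sub, EReal.coe_le_coe_iff]
  unfold tupleFun smoothingLoss
  rw [← hm, ← hlogM, hlogh]
  set S : ℝ := ∑ i, ∑ j, if i < j then Real.log |t i - t j| else 0
  have hn1 : (n : ℝ) - 1 ≠ 0 := by linarith
  have e : (1 - 1 / n) * (2 / (n * (n - 1)) * S - Real.log M) -
      ((3 * Real.log n + Real.log 2 + 1) / n + Real.log (1 + 2 / n)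
        + (1 / p) * Real.log (1 + (1 / n : ℝ) ^ p)) =
      1 / n ^ 2 * (2 * S + n * (Real.log M - 3 * Real.log n - Real.log 2 - 1)) -
        (Real.log (1 + 2 / n) + Real.log M + 1 / p * Real.log (1 + (1 / n : ℝ) ^ p)) := by
    have e1 : (1 - 1 / n) * (2 / (n * (n - 1)) * S) = 2 * S / n ^ 2 := by field_simp
    have e2 : 1 / (n : ℝ) ^ 2 * (2 * S + n * (Real.log M - 3 * Real.log n - Real.log 2 - 1)) =
      2 * S / n ^ 2 + (Real.log M - 3 * Real.log n - Real.log 2 - 1) / n := by field_simp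
    rw [mul_sub, e1, e2]
    ring
  rw [e]
  linarith

lemma tendsto_smoothingLoss {p : ℝ} (hp : 0 < p) :
    Tendsto (fun n : ℕ => smoothingLoss p n) atTop (nhds 0) := by
  have hinv := tendsto_inv_atTop_nhds_zero_nat (𝕜 := ℝ)
  have hlog : Tendsto (fun n : ℕ => Real.log n / n) atTop (nhds 0) := by
    simpa [Function.comp_def] using (Real.tendsto_pow_log_div_mul_add_atTop 1 0 1 one_ne_zero).comp
      tendsto_natCast_atTop_atTop
  have h1 : Tendsto (fun n : ℕ => (3 * Real.log n + Real.log 2 + 1) / n) atTop (nhds 0) := by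
    have := (hlog.const_mul 3).add (hinv.const_mul (Real.log 2 + 1))
    simp only [mul_zero, add_zero] at this
    refine this.congr fun n => ?_
    ring
  have h2 : Tendsto (fun n : ℕ => Real.log (1 + 2 / n)) atTop (nhds 0) := by
    have h : Tendsto (fun n : ℕ => 1 + 2 / (n : ℝ)) atTop (nhds 1) := by
      simpa [div_eq_mul_inv] using (hinv.const_mul 2).const_add 1
    simpa using h.log one_ne_zero
  have h3 : Tendsto (fun n : ℕ => 1 / p * Real.log (1 + (1 / n : ℝ) ^ p)) atTop (nhds 0) := by
    have h : Tendsto (fun n : ℕ => 1 + (1 / n : ℝ) ^ p) atTop (nhds 1) := by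
      simpa [Real.zero_rpow hp.ne'] using (hinv.rpow_const (Or.inr hp.le)).const_add 1
    simpa using (h.log one_ne_zero).const_mul (1 / p)
  simpa [smoothingLoss] using (h1.add h2).add h3

/-- For every `0 < p < ∞`, there is a sequence of absolutely continuous probability measures
`ν_k ∈ M_1^p(ℝ_+) \ {δ_0}` with `liminf_{k→∞} 𝒥_p(ν_k) ≥ lim_{n→∞} log Δ_n(p)`. -/
theorem exists_seq_Jfun_liminf_ge (p : ℝ) (hp : 0 < p) :
    ∃ ν : ℕ → Measure ℝ, (∀ k, MemM1pPos p (ν k) ∧ ν k ≪ volume) ∧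
      ∃ L : ℝ, Tendsto (fun n => logDeltaN p n) atTop (nhds L) ∧
        (L : EReal) ≤ liminf (fun k => Jfun p (ν k)) atTop := by
  obtain ⟨L, hL, hle⟩ := exists_tendsto_logDeltaN hp
  have hex (k : ℕ) : ∃ ν : Measure ℝ, (MemM1pPos p ν ∧ ν ≪ volume) ∧
      (((1 - 1 / (k + 2 : ℕ)) * (L - 1 / (k + 2 : ℕ)) - smoothingLoss p (k + 2) : ℝ) : EReal)
        ≤ Jfun p ν := by
    have hlt : L - 1 / (k + 2 : ℕ) < logDeltaN p (k + 2) := by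
      have : (0 : ℝ) < 1 / (k + 2 : ℕ) := by positivity
      linarith [hle (k + 2) (by omega)]
    obtain ⟨r, ⟨t, h0, ht, rfl⟩, hr⟩ := exists_lt_of_lt_csSup (nonempty_tupleFun p (k + 2)) hlt
    obtain ⟨ν, hν, hJ⟩ := exists_measure_le_Jfun hp (by omega) h0 ht
    refine ⟨ν, hν, le_trans ?_ hJ⟩
    rw [EReal.coe_le_coe_iff]
    have h1 : (1 : ℝ) / (k + 2 : ℕ) ≤ 1 := by
      rw [div_le_one (by positivity)]
      push_cast
      linarith [(Nat.cast_nonneg k : (0 : ℝ) ≤ k)]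
    linarith [mul_le_mul_of_nonneg_left hr.le (sub_nonneg.2 h1)]
  choose ν hν hJ using hex
  refine ⟨ν, hν, L, hL, ?_⟩
  have hinv : Tendsto (fun n : ℕ => (1 : ℝ) / n) atTop (nhds 0) :=
    tendsto_one_div_atTop_nhds_zero_nat
  have hlim : Tendsto (fun n : ℕ => (1 - 1 / (n : ℝ)) * (L - 1 / n) - smoothingLoss p n)
      atTop (nhds L) := by
    simpa using ((hinv.const_sub 1).mul (hinv.const_sub L)).sub (tendsto_smoothingLoss hp)
  have hlim' := continuous_coe_real_ereal.continuousAt.tendsto.comp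
    (hlim.comp (tendsto_add_atTop_nat 2))
  rw [← hlim'.liminf_eq]
  exact liminf_le_liminf (Eventually.of_forall hJ)
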